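/- In the setting of the ADMM scheme (4) for the elastic-net splitting (problem (3)), assume in addition that λ₂ > 0 and λ₃ > 0. Then the sequence z₁^k = (W^k, b^k, A^k, U^k, Π^k, Λ^k) converges linearly: there exist a limit point z₁* which is a primal-dual optimal point, constants C > 0 and ρ ∈ (0,1), such that ‖z₁^k − z₁*‖ ≤ C ρ^k for all k. -/

import Mathlib

open Matrix Filter

/-!
Multiplying the constraints by the square roots of the penalties, and the primal variable `w` by
the square roots of the ridge weights, turns the scheme into ADMM with unit penalty for minimizing
`‖w‖ ^ 2 / 2 + G v` subject to `v = B w + d`, where `G` is separable, convex and positively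
homogeneous in each coordinate.

The pairs `(v, π)` of splitting variable and multiplier are Fejér monotone with respect to the
primal-dual solutions, and each step decreases the squared distance to any solution by at least the
squared step length plus a multiple of `‖w - w*‖ ^ 2`. Hence `w` and `v` converge to the unique
primal solution. A one-variable positively homogeneous function has the same subdifferential on
each open half line, and it is contained in the one at `0`; so from some step on the multipliers
lie in the box `∂G(v*)`. The optimal multipliers are the solutions of a linear system in this
box, and Hoffman's error bound estimates the squared distance of `(v, π)` to the solutions by a
multiple of the decrease. That distance therefore decays geometrically, and by Fejér monotonicity
it bounds the distance to the limit.
-/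

open scoped Topology InnerProductSpace

section Subdifferential

variable {E F : Type*} [NormedAddCommGroup E] [InnerProductSpace ℝ E]
  [NormedAddCommGroup F] [InnerProductSpace ℝ F]

/-- The subdifferential of convex analysis, with subgradients represented as vectors through the
inner product. -/
def subdifferential (f : E → ℝ) (x : E) : Set E := {s | ∀ y, f x + ⟪s, y - x⟫_ℝ ≤ f y}

variable {f : E → ℝ} {s t x y : E} {m : ℝ}

lemma isClosed_subdifferential (f : E → ℝ) (x : E) : IsClosed (subdifferential f x) := by
  simp only [subdifferential, Set.ofPred_forall]
  exact isClosed_iInter fun y => isClosed_le (by fun_prop) continuous_const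

lemma convex_subdifferential (f : E → ℝ) (x : E) : Convex ℝ (subdifferential f x) := by
  intro s hs t ht a b ha hb hab y
  obtain rfl : a = 1 - b := eq_sub_of_add_eq hab
  rw [inner_add_left, real_inner_smul_left, real_inner_smul_left]
  linarith [mul_le_mul_of_nonneg_left (hs y) ha, mul_le_mul_of_nonneg_left (ht y) hb]

lemma inner_sub_sub_nonneg_of_mem_subdifferential (hs : s ∈ subdifferential f x)
    (ht : t ∈ subdifferential f y) : 0 ≤ ⟪s - t, x - y⟫_ℝ := by
  have hsy := hs y
  have htx := ht x
  rw [← neg_sub x y, inner_neg_right] at hsy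
  rw [inner_sub_left]
  linarith

lemma nonneg_of_forall_mul_add_mul_sq_nonneg {a b : ℝ}
    (h : ∀ t, 0 < t → t ≤ 1 → 0 ≤ a * t + b * t ^ 2) : 0 ≤ a := by
  have hlim : Tendsto (fun t : ℝ => a + b * t) (𝓝[>] 0) (𝓝 a) := by
    have hcont : Continuous fun t : ℝ => a + b * t := by fun_prop
    simpa using (hcont.tendsto 0).mono_left nhdsWithin_le_nhds
  refine ge_of_tendsto hlim ?_
  filter_upwards [Ioc_mem_nhdsGT (zero_lt_one (α := ℝ))] with t ⟨ht0, ht1⟩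
  exact nonneg_of_mul_nonneg_right (by linarith [h t ht0 ht1] : 0 ≤ t * (a + b * t)) ht0

lemma add_inner_add_sq_norm_le_of_mem_subdifferential (hf : StrongConvexOn Set.univ m f)
    (hs : s ∈ subdifferential f x) (y : E) :
    f x + ⟪s, y - x⟫_ℝ + m / 2 * ‖y - x‖ ^ 2 ≤ f y := by
  suffices 0 ≤ f y - f x - ⟪s, y - x⟫_ℝ - m / 2 * ‖y - x‖ ^ 2 by linarith
  refine nonneg_of_forall_mul_add_mul_sq_nonneg (b := m / 2 * ‖y - x‖ ^ 2) fun t ht0 ht1 => ?_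
  have hsegment : (1 - t) • x + t • y = x + t • (y - x) := by module
  have hconv := hf.2 (Set.mem_univ x) (Set.mem_univ y) (sub_nonneg.2 ht1) ht0.le (by ring)
  have hsub := hs (x + t • (y - x))
  rw [hsegment, norm_sub_rev x y] at hconv
  rw [add_sub_cancel_left, inner_smul_right] at hsub
  simp only [smul_eq_mul] at hconv
  linarith

lemma mul_sq_norm_sub_le_inner_of_mem_subdifferential (hf : StrongConvexOn Set.univ m f)
    (hs : s ∈ subdifferential f x) (ht : t ∈ subdifferential f y) :
    m * ‖x - y‖ ^ 2 ≤ ⟪s - t, x - y⟫_ℝ := by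
  have hsy := add_inner_add_sq_norm_le_of_mem_subdifferential hf hs y
  have htx := add_inner_add_sq_norm_le_of_mem_subdifferential hf ht x
  rw [← neg_sub x y, inner_neg_right, norm_neg] at hsy
  rw [inner_sub_left]
  linarith

lemma eq_of_mem_subdifferential_of_hasGradientAt [CompleteSpace E]
    (hs : s ∈ subdifferential f x) (hf : HasGradientAt f t x) : s = t := by
  have hmin : IsLocalMin (fun y => f y - ⟪s, y⟫_ℝ) x := Eventually.of_forall fun y => by
    have := hs y
    rw [inner_sub_right] at this
    linarith
  have hzero := hmin.hasFDerivAt_eq_zero (hf.hasFDerivAt.sub (innerSL ℝ s).hasFDerivAt)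
  refine (ext_inner_right ℝ fun y => ?_ : t = s).symm
  simpa [sub_eq_zero] using DFunLike.congr_fun hzero y

lemma mem_subdifferential_of_isMin_add_sq_norm [CompleteSpace E] [CompleteSpace F]
    (hf : ConvexOn ℝ Set.univ f) (T : E →L[ℝ] F) (a : F)
    (hmin : ∀ y, f x + ‖T x - a‖ ^ 2 / 2 ≤ f y + ‖T y - a‖ ^ 2 / 2) :
    T.adjoint (a - T x) ∈ subdifferential f x := by
  intro y
  suffices 0 ≤ f y - f x - ⟪a - T x, T (y - x)⟫_ℝ by
    rw [ContinuousLinearMap.adjoint_inner_left]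
    linarith
  refine nonneg_of_forall_mul_add_mul_sq_nonneg (b := ‖T (y - x)‖ ^ 2 / 2) fun t ht0 ht1 => ?_
  have hsegment : (1 - t) • x + t • y = x + t • (y - x) := by module
  have hconv := hf.2 (Set.mem_univ x) (Set.mem_univ y) (sub_nonneg.2 ht1) ht0.le (by ring)
  have hresidual : T (x + t • (y - x)) - a = t • T (y - x) - (a - T x) := by
    rw [map_add, map_smul]
    abel
  have hle := hmin (x + t • (y - x))
  rw [hresidual, norm_sub_rev (T x), norm_sub_sq_real (t • T (y - x)), norm_smul,
    real_inner_smul_left, real_inner_comm] at hle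
  rw [hsegment] at hconv
  simp only [smul_eq_mul, mul_pow, Real.norm_eq_abs, sq_abs] at hconv hle
  linarith

lemma subdifferential_smul_of_posHom (hf : ∀ c : ℝ, 0 ≤ c → ∀ x, f (c • x) = c * f x) {c : ℝ}
    (hc : 0 < c) (x : E) : subdifferential f (c • x) = subdifferential f x := by
  have subset (c : ℝ) (hc : 0 < c) (x : E) :
      subdifferential f x ⊆ subdifferential f (c • x) := fun s hs y => by
    have h := mul_le_mul_of_nonneg_left (hs (c⁻¹ • y)) hc.le
    rw [mul_add, ← hf c hc.le, ← hf c hc.le, ← real_inner_smul_right, smul_sub,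
      smul_inv_smul₀ hc.ne'] at h
    exact h
  refine (subset c hc x).antisymm' ?_
  simpa [smul_smul, inv_mul_cancel₀ hc.ne'] using subset c⁻¹ (inv_pos.2 hc) (c • x)

lemma subdifferential_subset_zero_of_posHom (hf : ∀ c : ℝ, 0 ≤ c → ∀ x, f (c • x) = c * f x)
    (x : E) : subdifferential f x ⊆ subdifferential f 0 := by
  intro s hs y
  have hzero : f 0 = 0 := by simpa using hf 0 le_rfl 0
  have hy := hs y
  have hdouble := hs ((2 : ℝ) • x)
  rw [hf 2 zero_le_two, two_smul, add_sub_cancel_left] at hdouble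
  rw [inner_sub_right] at hy
  rw [hzero, sub_zero]
  linarith

lemma eventually_subdifferential_subset_of_posHom {g : ℝ → ℝ}
    (hg : ∀ c : ℝ, 0 ≤ c → ∀ x, g (c • x) = c * g x) (x : ℝ) :
    ∀ᶠ z in 𝓝 x, subdifferential g z ⊆ subdifferential g x := by
  rcases eq_or_ne x 0 with rfl | hx
  · exact Eventually.of_forall (subdifferential_subset_zero_of_posHom hg)
  have hratio : ∀ᶠ z in 𝓝 x, 0 < z / x :=
    (continuous_id.div_const x).continuousAt.eventually_const_lt (by simp [hx])
  filter_upwards [hratio] with z hz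
  have hsmul : (z / x) • x = z := div_mul_cancel₀ z hx
  exact (hsmul ▸ subdifferential_smul_of_posHom hg hz x).subset

end Subdifferential

section FejerMonotone

lemma tendsto_zero_of_add_le {u D : ℕ → ℝ} (hu : ∀ k, 0 ≤ u k) (hD : ∀ k, 0 ≤ D k)
    (hdecrease : ∀ k, u (k + 1) + D k ≤ u k) : Tendsto D atTop (𝓝 0) := by
  refine (summable_of_sum_range_le (c := u 0) hD fun N => ?_).tendsto_atTop_zero
  calc ∑ k ∈ Finset.range N, D k ≤ ∑ k ∈ Finset.range N, (u k - u (k + 1)) :=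
        Finset.sum_le_sum fun k _ => by linarith [hdecrease k]
    _ ≤ u 0 := by linarith [Finset.sum_range_sub' u N, hu N]

lemma tendsto_zero_of_sq_norm_le {E : Type*} [SeminormedAddCommGroup E] {x : ℕ → E} {D : ℕ → ℝ}
    (hx : ∀ k, ‖x k‖ ^ 2 ≤ D k) (hD : Tendsto D atTop (𝓝 0)) : Tendsto x atTop (𝓝 0) :=
  squeeze_zero_norm (fun k => Real.le_sqrt_of_sq_le (hx k)) (by simpa using hD.sqrt)

lemma isBigO_pow_of_comp_nat_add {E : Type*} [SeminormedAddCommGroup E] {u : ℕ → E} {ρ : ℝ}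
    (hρ : ρ ≠ 0) (N : ℕ) (h : (fun k => u (N + k)) =O[atTop] fun k => ρ ^ k) :
    u =O[atTop] fun k => ρ ^ k := by
  rw [← map_add_atTop_eq_nat N, Asymptotics.isBigO_map]
  simp only [Function.comp_def, add_comm _ N]
  refine h.trans (.of_bound (‖ρ ^ N‖⁻¹) (.of_forall fun k => ?_))
  rw [pow_add, norm_mul, inv_mul_cancel_left₀ (by simp [hρ])]

variable {X : Type*} [PseudoMetricSpace X] {S : Set X} {z : ℕ → X}

/-- A sequence is Fejér monotone with respect to `S` if it never moves away from any point
of `S`. -/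
def IsFejerMonotone (S : Set X) (z : ℕ → X) : Prop :=
  ∀ s ∈ S, ∀ k, dist (z (k + 1)) s ≤ dist (z k) s

lemma IsFejerMonotone.dist_le (h : IsFejerMonotone S z) (hS : S.Nonempty) {k l : ℕ} (hkl : k ≤ l) :
    dist (z k) (z l) ≤ 2 * Metric.infDist (z k) S := by
  rw [← div_le_iff₀' two_pos]
  refine (Metric.le_infDist hS).2 fun s hs => ?_
  have hmono : dist (z l) s ≤ dist (z k) s :=
    antitone_nat_of_succ_le (f := fun k => dist (z k) s) (h s hs) hkl
  linarith [dist_triangle_right (z k) (z l) s]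

lemma IsFejerMonotone.exists_forall_dist_le [CompleteSpace X] (h : IsFejerMonotone S z)
    (hclosed : IsClosed S) (hS : S.Nonempty)
    (hlim : Tendsto (fun k => Metric.infDist (z k) S) atTop (𝓝 0)) :
    ∃ s ∈ S, ∀ k, dist (z k) s ≤ 2 * Metric.infDist (z k) S := by
  have hcauchy : CauchySeq z :=
    cauchySeq_of_le_tendsto_0' _ (fun k l hkl => h.dist_le hS hkl) (by simpa using hlim.const_mul 2)
  obtain ⟨s, hs⟩ := cauchySeq_tendsto_of_complete hcauchy
  refine ⟨s, (hclosed.mem_iff_infDist_zero hS).2 ?_, fun k => ?_⟩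
  · exact tendsto_nhds_unique (((Metric.continuous_infDist_pt S).tendsto s).comp hs) hlim
  · exact le_of_tendsto (tendsto_const_nhds.dist hs) <|
      (eventually_ge_atTop k).mono fun l hkl => h.dist_le hS hkl

lemma le_sq_infDist {x : X} {c : ℝ} (hS : S.Nonempty) (h : ∀ s ∈ S, c ≤ dist x s ^ 2) :
    c ≤ Metric.infDist x S ^ 2 :=
  (Real.sqrt_le_iff.1 <| (Metric.le_infDist hS).2 fun s hs =>
    Real.sqrt_le_iff.2 ⟨dist_nonneg, h s hs⟩).2

lemma exists_infDist_le_mul_pow {D : ℕ → ℝ} {C : ℝ} (hS : S.Nonempty)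
    (hdecrease : ∀ s ∈ S, ∀ k, dist (z (k + 1)) s ^ 2 + D k ≤ dist (z k) s ^ 2)
    (hC : 0 < C) (herror : ∀ k, Metric.infDist (z (k + 1)) S ^ 2 ≤ C * D k) :
    ∃ ρ ∈ Set.Ioo (0 : ℝ) 1, ∀ k, Metric.infDist (z k) S ≤ Metric.infDist (z 0) S * ρ ^ k := by
  have hcontract (k : ℕ) :
      (1 + C⁻¹) * Metric.infDist (z (k + 1)) S ^ 2 ≤ Metric.infDist (z k) S ^ 2 := by
    have hle : Metric.infDist (z (k + 1)) S ^ 2 + D k ≤ Metric.infDist (z k) S ^ 2 :=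
      le_sq_infDist hS fun s hs => (hdecrease s hs k).trans' <| by
        gcongr
        exacts [Metric.infDist_nonneg, Metric.infDist_le_dist_of_mem hs]
    have : C⁻¹ * Metric.infDist (z (k + 1)) S ^ 2 ≤ D k := (inv_mul_le_iff₀ hC).2 (herror k)
    linarith
  have hgrowth : 1 < √(1 + C⁻¹) := Real.lt_sqrt_of_sq_lt (by simpa using hC)
  refine ⟨(√(1 + C⁻¹))⁻¹, ⟨by positivity, inv_lt_one_of_one_lt₀ hgrowth⟩, fun k => ?_⟩
  rw [mul_comm]
  refine le_geom (u := fun k => Metric.infDist (z k) S) (inv_nonneg.2 (Real.sqrt_nonneg _)) k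
    fun l _ => ?_
  rw [le_inv_mul_iff₀ (zero_lt_one.trans hgrowth)]
  refine (abs_le_of_sq_le_sq' ?_ Metric.infDist_nonneg).2
  rw [mul_pow, Real.sq_sqrt (by positivity)]
  exact hcontract l

lemma exists_isBigO_pow_of_sq_infDist_le [CompleteSpace X] {D : ℕ → ℝ} {C : ℝ}
    (hclosed : IsClosed S) (hS : S.Nonempty) (hD : ∀ k, 0 ≤ D k)
    (hdecrease : ∀ s ∈ S, ∀ k, dist (z (k + 1)) s ^ 2 + D k ≤ dist (z k) s ^ 2)
    (hC : 0 < C) (herror : ∀ k, Metric.infDist (z (k + 1)) S ^ 2 ≤ C * D k) :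
    ∃ s ∈ S, ∃ ρ ∈ Set.Ioo (0 : ℝ) 1, (fun k => dist (z k) s) =O[atTop] fun k => ρ ^ k := by
  obtain ⟨ρ, hρ, hgeometric⟩ := exists_infDist_le_mul_pow hS hdecrease hC herror
  have hfejer : IsFejerMonotone S z := fun s hs k =>
    (sq_le_sq₀ dist_nonneg dist_nonneg).1 (by linarith [hdecrease s hs k, hD k])
  have hlim : Tendsto (fun k => Metric.infDist (z k) S) atTop (𝓝 0) :=
    squeeze_zero (fun _ => Metric.infDist_nonneg) hgeometric <| by
      simpa using (tendsto_pow_atTop_nhds_zero_of_lt_one hρ.1.le hρ.2).const_mul _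
  obtain ⟨s, hs, hdist⟩ := hfejer.exists_forall_dist_le hclosed hS hlim
  refine ⟨s, hs, ρ, hρ, .of_bound (2 * Metric.infDist (z 0) S) (.of_forall fun k => ?_)⟩
  rw [Real.norm_of_nonneg dist_nonneg, Real.norm_of_nonneg (pow_nonneg hρ.1.le k), mul_assoc]
  exact (hdist k).trans (mul_le_mul_of_nonneg_left (hgeometric k) zero_le_two)

end FejerMonotone

section HoffmanBound

/-- A Hoffman error bound for the linear system `T z = T y`, `z ∈ K`: the distance from a point
`x` of `K` to its solution set is controlled by the residual. -/
def HasHoffmanBound {E F : Type*} [NormedAddCommGroup E] [NormedSpace ℝ E]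
    [NormedAddCommGroup F] [NormedSpace ℝ F] (T : E →L[ℝ] F) (K : Set E) : Prop :=
  ∃ κ, 0 ≤ κ ∧ ∀ x ∈ K, ∀ y ∈ K, ∃ z ∈ K, T z = T y ∧ ‖x - z‖ ≤ κ * ‖T (x - y)‖

lemma exists_norm_le_mul_norm_of_cone {E F : Type*} [NormedAddCommGroup E] [NormedSpace ℝ E]
    [FiniteDimensional ℝ E] [NormedAddCommGroup F] [NormedSpace ℝ F] (T : E →L[ℝ] F)
    {K : Set E} (hK : IsClosed K) (hcone : ∀ x ∈ K, ∀ t : ℝ, 0 ≤ t → t • x ∈ K)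
    (hker : ∀ x ∈ K, T x = 0 → x = 0) : ∃ κ, 0 ≤ κ ∧ ∀ x ∈ K, ‖x‖ ≤ κ * ‖T x‖ := by
  have := FiniteDimensional.proper ℝ E
  have hcompact : IsCompact (Metric.sphere (0 : E) 1 ∩ K) := (isCompact_sphere 0 1).inter_right hK
  have normalize_mem {x : E} (hx : x ∈ K) (hx0 : x ≠ 0) :
      ‖x‖⁻¹ • x ∈ Metric.sphere (0 : E) 1 ∩ K :=
    ⟨by simp [norm_smul, hx0], hcone x hx _ (by positivity)⟩
  rcases (Metric.sphere (0 : E) 1 ∩ K).eq_empty_or_nonempty with hempty | hne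
  · refine ⟨0, le_rfl, fun x hx => ?_⟩
    by_cases hx0 : x = 0
    · simp [hx0]
    · exact absurd (hempty ▸ normalize_mem hx hx0) (Set.notMem_empty _)
  · obtain ⟨z, ⟨hz1, hzK⟩, hz⟩ := hcompact.exists_isMinOn hne (f := fun x => ‖T x‖) (by fun_prop)
    have hpos : 0 < ‖T z‖ := norm_pos_iff.2 fun h => by simp [hker z hzK h] at hz1
    refine ⟨‖T z‖⁻¹, by positivity, fun x hx => ?_⟩
    by_cases hx0 : x = 0
    · simp [hx0]
    have hle : ‖T z‖ ≤ ‖T (‖x‖⁻¹ • x)‖ := hz (normalize_mem hx hx0)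
    rw [map_smul, norm_smul, norm_inv, norm_norm, le_inv_mul_iff₀ (norm_pos_iff.2 hx0)] at hle
    rwa [le_inv_mul_iff₀ hpos, mul_comm]

lemma eventually_mul_mem_uIcc {x y : ℝ} (h : |x| = SignType.sign y * x) :
    ∀ᶠ ε in 𝓝[>] 0, ε * x ∈ Set.uIcc 0 y := by
  have hcont : Continuous fun ε : ℝ => ε * x := by fun_prop
  have hlim : Tendsto (fun ε : ℝ => ε * x) (𝓝[>] 0) (𝓝 0) := by
    simpa using (hcont.tendsto 0).mono_left nhdsWithin_le_nhds
  rcases lt_trichotomy y 0 with hy | rfl | hy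
  · have hx : x ≤ 0 := abs_eq_neg_self.1 (by simpa [sign_neg hy] using h)
    filter_upwards [hlim.eventually_const_le hy, self_mem_nhdsWithin] with ε hε hε0
    exact Set.mem_uIcc.2 (.inr ⟨hε, mul_nonpos_of_nonneg_of_nonpos (le_of_lt hε0) hx⟩)
  · simp [show x = 0 by simpa using h]
  · have hx : 0 ≤ x := abs_eq_self.1 (by simpa [sign_pos hy] using h)
    filter_upwards [hlim.eventually_le_const hy, self_mem_nhdsWithin] with ε hε hε0
    exact Set.mem_uIcc.2 (.inl ⟨mul_nonneg (le_of_lt hε0) hx, hε⟩)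

lemma abs_sub_of_mem_uIcc_zero {u y : ℝ} (hu : u ∈ Set.uIcc 0 y) : |y - u| = |y| - |u| := by
  rcases Set.mem_uIcc.1 hu with ⟨h0, hy⟩ | ⟨hy, h0⟩
  · rw [abs_of_nonneg (sub_nonneg.2 hy), abs_of_nonneg (h0.trans hy), abs_of_nonneg h0]
  · rw [abs_of_nonpos (sub_nonpos.2 hy), abs_of_nonpos (hy.trans h0), abs_of_nonpos h0]
    ring

variable {ι F : Type*} [NormedAddCommGroup F] [NormedSpace ℝ F]

/-- The closed face of an orthant of `ι → ℝ` prescribed by the sign vector `σ`; coordinates of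
sign `0` vanish on it. -/
def orthant (σ : ι → SignType) : Set (ι → ℝ) := {x | ∀ i, |x i| = σ i * x i}

lemma isClosed_orthant (σ : ι → SignType) : IsClosed (orthant σ) := by
  simp only [orthant, Set.ofPred_forall]
  exact isClosed_iInter fun i => isClosed_eq (by fun_prop) (by fun_prop)

lemma smul_mem_orthant {σ : ι → SignType} {x : ι → ℝ} (hx : x ∈ orthant σ) {t : ℝ} (ht : 0 ≤ t) :
    t • x ∈ orthant σ := fun i => by
  rw [Pi.smul_apply, smul_eq_mul, abs_mul, abs_of_nonneg ht, hx i, mul_left_comm]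

lemma mem_orthant_sign (y : ι → ℝ) : y ∈ orthant fun i => SignType.sign (y i) :=
  fun i => (sign_mul_self (y i)).symm

variable [Fintype ι]

lemma eq_zero_of_mem_orthant_of_isMinOn {T : (ι → ℝ) →L[ℝ] F} {y δ ξ : ι → ℝ}
    (hy : y ∈ Set.uIcc 0 δ) (hTy : T y = T δ)
    (hmin : IsMinOn (fun z => ∑ i, |z i|) (Set.uIcc 0 δ ∩ {z | T z = T δ}) y)
    (hξ : ξ ∈ orthant fun i => SignType.sign (y i)) (hTξ : T ξ = 0) : ξ = 0 := by
  -- Moving `y` along `-ξ` stays in the box and, unless `ξ = 0`, decreases the `ℓ¹` norm.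
  obtain ⟨ε, hmem, hε⟩ := ((eventually_all.2 fun i => eventually_mul_mem_uIcc (hξ i)).and
    self_mem_nhdsWithin).exists
  have hsub : y - ε • ξ ∈ Set.uIcc 0 δ := by
    refine Set.uIcc_subset_uIcc_left hy ?_
    rw [← Set.pi_univ_uIcc]
    intro i _
    have hreflect : (fun t => y i - t) ⁻¹' Set.uIcc 0 (y i) = Set.uIcc 0 (y i) := by
      simp [Set.uIcc_comm]
    exact hreflect.ge (hmem i)
  have hle : ∑ i, |y i| ≤ ∑ i, |(y - ε • ξ) i| := hmin ⟨hsub, by simp [hTξ, hTy]⟩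
  have hsum : ∑ i, |ε * ξ i| ≤ 0 := by
    have hsplit : ∑ i, |(y - ε • ξ) i| = ∑ i, |y i| - ∑ i, |ε * ξ i| := by
      rw [← Finset.sum_sub_distrib]
      exact Finset.sum_congr rfl fun i _ => abs_sub_of_mem_uIcc_zero (hmem i)
    linarith
  funext i
  have hzero := (Finset.sum_eq_zero_iff_of_nonneg fun i _ => abs_nonneg (ε * ξ i)).1
    (hsum.antisymm (by positivity)) i (Finset.mem_univ i)
  simpa [ne_of_gt hε] using hzero

lemma exists_mem_uIcc_norm_le (T : (ι → ℝ) →L[ℝ] F) :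
    ∃ κ, 0 ≤ κ ∧ ∀ δ, ∃ y ∈ Set.uIcc 0 δ, T y = T δ ∧ ‖y‖ ≤ κ * ‖T δ‖ := by
  have bound (σ : ι → SignType) : ∃ κ, 0 ≤ κ ∧
      ((∀ x ∈ orthant σ, T x = 0 → x = 0) → ∀ x ∈ orthant σ, ‖x‖ ≤ κ * ‖T x‖) := by
    by_cases hker : ∀ x ∈ orthant σ, T x = 0 → x = 0
    · obtain ⟨κ, hκ, hle⟩ := exists_norm_le_mul_norm_of_cone T (isClosed_orthant σ)
        (fun x hx t ht => smul_mem_orthant hx ht) hker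
      exact ⟨κ, hκ, fun _ => hle⟩
    · exact ⟨0, le_rfl, fun h => absurd h hker⟩
  choose κ hκ hbound using bound
  obtain ⟨κmax, hmax⟩ := Finite.exists_le κ
  refine ⟨κmax, (hκ 0).trans (hmax 0), fun δ => ?_⟩
  have hcompact : IsCompact (Set.uIcc 0 δ ∩ {z | T z = T δ}) :=
    (isCompact_Icc (a := 0 ⊓ δ) (b := 0 ⊔ δ)).inter_right
      (isClosed_eq T.continuous continuous_const)
  obtain ⟨y, ⟨hy, hTy⟩, hmin⟩ := hcompact.exists_isMinOn ⟨δ, Set.right_mem_uIcc, rfl⟩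
    (f := fun z => ∑ i, |z i|) (by fun_prop)
  refine ⟨y, hy, hTy, ?_⟩
  calc ‖y‖ ≤ κ (fun i => SignType.sign (y i)) * ‖T y‖ :=
        hbound _ (fun ξ hξ hTξ => eq_zero_of_mem_orthant_of_isMinOn hy hTy hmin hξ hTξ) y
          (mem_orthant_sign y)
    _ ≤ κmax * ‖T δ‖ := by
        rw [hTy]
        gcongr
        exact hmax _

lemma hasHoffmanBound_box (T : EuclideanSpace ℝ ι →L[ℝ] F) {I : ι → Set ℝ}
    (hI : ∀ i, (I i).OrdConnected) : HasHoffmanBound T {x | ∀ i, x i ∈ I i} := by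
  let e := EuclideanSpace.equiv ι ℝ
  obtain ⟨κ, hκ, hbound⟩ := exists_mem_uIcc_norm_le (T ∘L e.symm.toContinuousLinearMap)
  refine ⟨‖(e.symm : (ι → ℝ) →L[ℝ] EuclideanSpace ℝ ι)‖ * κ, by positivity, fun x hx y hy => ?_⟩
  obtain ⟨u, hu, hTu, hnorm⟩ := hbound (e (y - x))
  replace hTu : T (e.symm u) = T (y - x) := by simpa using hTu
  replace hnorm : ‖u‖ ≤ κ * ‖T (y - x)‖ := by simpa using hnorm
  refine ⟨x + e.symm u, fun i => ?_, ?_, ?_⟩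
  · refine (hI i).uIcc_subset (hx i) (hy i) ?_
    rw [← Set.pi_univ_uIcc] at hu
    have htranslate : (fun t => x i + t) ⁻¹' Set.uIcc (x i) (y i) = Set.uIcc 0 (y i - x i) := by
      simp
    exact htranslate.ge (hu i (Set.mem_univ i))
  · rw [map_add, hTu, map_sub, add_sub_cancel]
  · rw [sub_add_cancel_left, norm_neg, ← norm_neg (T (x - y)), ← map_neg, neg_sub, mul_assoc]
    exact (e.symm : (ι → ℝ) →L[ℝ] EuclideanSpace ℝ ι).le_opNorm_of_le hnorm

end HoffmanBound

section ADMM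

variable {H V : Type*} [NormedAddCommGroup H] [InnerProductSpace ℝ H]
  [NormedAddCommGroup V] [InnerProductSpace ℝ V]

/-- The Lagrangian of the problem of minimizing `f w + G v` subject to `v = B w + d`. -/
def lagrangian (f : H → ℝ) (G : V → ℝ) (B : H →L[ℝ] V) (d : V) (w : H) (v π : V) : ℝ :=
  f w + G v + ⟪π, B w + d - v⟫_ℝ

/-- The Lagrangian augmented by the quadratic penalty of the constraint, with unit weight. -/
noncomputable def augLagrangian (f : H → ℝ) (G : V → ℝ) (B : H →L[ℝ] V) (d : V) (w : H)
    (v π : V) : ℝ :=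
  lagrangian f G B d w v π + ‖B w + d - v‖ ^ 2 / 2

lemma augLagrangian_eq (f : H → ℝ) (G : V → ℝ) (B : H →L[ℝ] V) (d : V) (w : H) (v π : V) :
    augLagrangian f G B d w v π = f w + G v + ‖B w + d - v + π‖ ^ 2 / 2 - ‖π‖ ^ 2 / 2 := by
  rw [augLagrangian, lagrangian, norm_add_sq_real, real_inner_comm]
  ring

variable [CompleteSpace H] [CompleteSpace V]

/-- The Karush–Kuhn–Tucker conditions of the problem of minimizing `f w + G v` subject to
`v = B w + d`, for the primal point `(w, v)` and the multiplier `π`. -/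
structure IsKKT (f : H → ℝ) (G : V → ℝ) (B : H →L[ℝ] V) (d : V) (w : H) (v π : V) : Prop where
  feasible : v = B w + d
  stationary : -B.adjoint π ∈ subdifferential f w
  mem_subdifferential : π ∈ subdifferential G v

/-- The optimality conditions of an ADMM step with unit penalty, leading from the splitting
variable `v` and multiplier `π` to `(w', v', π')`. -/
structure IsADMMStep (f : H → ℝ) (G : V → ℝ) (B : H →L[ℝ] V) (d : V) (v π : V) (w' : H)
    (v' π' : V) : Prop where
  stationary : -B.adjoint (π' + (v' - v)) ∈ subdifferential f w'
  mem_subdifferential : π' ∈ subdifferential G v'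
  dual_update : π' = π + (B w' + d - v')

variable {f : H → ℝ} {F : H → H} {G : V → ℝ} {B : H →L[ℝ] V} {d : V} {w ws w' : H}
  {v vs v' π πs π' : V} {m : ℝ}

lemma isKKT_iff : IsKKT f G B d w v π ↔
    v = B w + d ∧ ∀ w' v', lagrangian f G B d w v π ≤ lagrangian f G B d w' v' π := by
  constructor
  · rintro ⟨hfeasible, hf, hG⟩
    refine ⟨hfeasible, fun w' v' => ?_⟩
    have hfw := hf w'
    have hGv := hG v'
    rw [inner_neg_left, B.adjoint_inner_left, map_sub, inner_sub_right] at hfw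
    rw [inner_sub_right] at hGv
    simp only [lagrangian, inner_sub_right, inner_add_right]
    linarith
  · rintro ⟨hfeasible, hmin⟩
    refine ⟨hfeasible, fun w' => ?_, fun v' => ?_⟩
    · have hle := hmin w' v
      simp only [lagrangian, inner_sub_right, inner_add_right] at hle
      rw [inner_neg_left, B.adjoint_inner_left, map_sub, inner_sub_right]
      linarith
    · have hle := hmin w v'
      simp only [lagrangian, inner_sub_right, inner_add_right] at hle
      rw [inner_sub_right]
      linarith

lemma isClosed_setOf_isKKT (f : H → ℝ) (G : V → ℝ) (B : H →L[ℝ] V) (d : V) (w : H) (v : V) :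
    IsClosed {π | IsKKT f G B d w v π} := by
  have heq : {π | IsKKT f G B d w v π} = {_π | v = B w + d} ∩
      ((fun π => -B.adjoint π) ⁻¹' subdifferential f w ∩ subdifferential G v) :=
    Set.ext fun π => ⟨fun h => ⟨h.1, h.2, h.3⟩, fun h => ⟨h.1, h.2.1, h.2.2⟩⟩
  rw [heq]
  exact isClosed_const.inter
    (((isClosed_subdifferential f w).preimage (by fun_prop)).inter (isClosed_subdifferential G v))

lemma IsADMMStep.of_forall_augLagrangian_le (hf : ConvexOn ℝ Set.univ f)
    (hG : ConvexOn ℝ Set.univ G)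
    (hw : ∀ y, augLagrangian f G B d w' v π ≤ augLagrangian f G B d y v π)
    (hv : ∀ y, augLagrangian f G B d w' v' π ≤ augLagrangian f G B d w' y π)
    (hπ : π' = π + (B w' + d - v')) : IsADMMStep f G B d v π w' v' π' where
  stationary := by
    have hmin := mem_subdifferential_of_isMin_add_sq_norm hf B (v - d - π) (x := w') fun y => by
      have hle := hw y
      simp only [augLagrangian_eq] at hle
      have hresidual (x : H) : B x - (v - d - π) = B x + d - v + π := by abel
      rw [hresidual, hresidual]
      linarith
    have heq : -B.adjoint (π' + (v' - v)) = B.adjoint (v - d - π - B w') := by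
      rw [hπ, ← map_neg]
      congr 1
      abel
    exact heq ▸ hmin
  mem_subdifferential := by
    have hmin := mem_subdifferential_of_isMin_add_sq_norm hG (ContinuousLinearMap.id ℝ V)
      (B w' + d + π) (x := v') fun y => by
        have hle := hv y
        simp only [augLagrangian_eq] at hle
        have hresidual (x : V) : x - (B w' + d + π) = -(B w' + d - x + π) := by abel
        simp only [ContinuousLinearMap.id_apply]
        rw [hresidual, hresidual, norm_neg, norm_neg]
        linarith
    have heq : π' = (ContinuousLinearMap.id ℝ V).adjoint (B w' + d + π - v') := by
      rw [hπ, ContinuousLinearMap.adjoint_id, ContinuousLinearMap.id_apply]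
      abel
    exact heq ▸ hmin
  dual_update := hπ

lemma IsADMMStep.map_sub_eq (h : IsADMMStep f G B d v π w' v' π') (hs : IsKKT f G B d ws vs πs) :
    B (w' - ws) = π' - π + (v' - vs) := by
  rw [h.dual_update, hs.feasible, map_sub]
  abel

lemma IsADMMStep.sq_norm_add_le (hf : StrongConvexOn Set.univ m f)
    (h : IsADMMStep f G B d v π w' v' π') (hs : IsKKT f G B d ws vs πs)
    (hπ : π ∈ subdifferential G v) :
    ‖v' - vs‖ ^ 2 + ‖π' - πs‖ ^ 2
        + (‖v' - v‖ ^ 2 + ‖π' - π‖ ^ 2 + 2 * m * ‖w' - ws‖ ^ 2)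
      ≤ ‖v - vs‖ ^ 2 + ‖π - πs‖ ^ 2 := by
  have hprimal : m * ‖w' - ws‖ ^ 2 ≤ -⟪π' - πs + (v' - v), π' - π + (v' - vs)⟫_ℝ := by
    rw [← h.map_sub_eq hs, ← B.adjoint_inner_left, ← inner_neg_left]
    convert mul_sq_norm_sub_le_inner_of_mem_subdifferential hf h.stationary hs.stationary using 2
    simp only [map_add, map_sub]
    abel
  have hdual := inner_sub_sub_nonneg_of_mem_subdifferential h.mem_subdifferential
    hs.mem_subdifferential
  have hstep := inner_sub_sub_nonneg_of_mem_subdifferential h.mem_subdifferential hπ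
  have hv : v - vs = v' - vs - (v' - v) := by abel
  have hππ : π - πs = π' - πs - (π' - π) := by abel
  rw [hv, hππ, norm_sub_sq_real (v' - vs), norm_sub_sq_real (π' - πs)]
  rw [inner_add_left, inner_add_right, inner_add_right] at hprimal
  rw [real_inner_comm] at hstep
  linarith [real_inner_comm (v' - vs) (v' - v)]

lemma exists_sq_norm_sub_le_of_isADMMStep {L : NNReal} (hf : ∀ w, HasGradientAt f (F w) w)
    (hF : LipschitzWith L F) (hm : 0 < m)
    (hbound : HasHoffmanBound B.adjoint (subdifferential G vs)) (hs : IsKKT f G B d ws vs πs) :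
    ∃ C, 0 < C ∧ ∀ {v π w' v' π'}, IsADMMStep f G B d v π w' v' π' → π' ∈ subdifferential G vs →
      ∃ πb, IsKKT f G B d ws vs πb ∧ ‖v' - vs‖ ^ 2 + ‖π' - πb‖ ^ 2 ≤
        C * (‖v' - v‖ ^ 2 + ‖π' - π‖ ^ 2 + 2 * m * ‖w' - ws‖ ^ 2) := by
  obtain ⟨κ, hκ, hhoffman⟩ := hbound
  set C := 2 + 2 * κ ^ 2 * ‖B‖ ^ 2 + (‖B‖ ^ 2 + κ ^ 2 * L ^ 2) / m with hC
  refine ⟨C, by positivity, fun {v π w' v' π'} h hπ' => ?_⟩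
  obtain ⟨πb, hπb, hadjoint, hdist⟩ := hhoffman π' hπ' πs hs.mem_subdifferential
  refine ⟨πb, ⟨hs.feasible, hadjoint ▸ hs.stationary, hπb⟩, ?_⟩
  have hprimal : ‖v' - vs‖ ≤ ‖B‖ * ‖w' - ws‖ + ‖π' - π‖ := by
    rw [eq_sub_of_add_eq' (h.map_sub_eq hs).symm]
    exact (norm_sub_le _ _).trans (add_le_add_left (B.le_opNorm _) _)
  have hresidual : B.adjoint (π' - πs) = F ws - F w' - B.adjoint (v' - v) := by
    rw [← eq_of_mem_subdifferential_of_hasGradientAt h.stationary (hf w'),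
      ← eq_of_mem_subdifferential_of_hasGradientAt hs.stationary (hf ws), map_sub, map_add]
    abel
  have hdual : ‖π' - πb‖ ≤ κ * (L * ‖w' - ws‖ + ‖B‖ * ‖v' - v‖) := by
    refine hdist.trans (mul_le_mul_of_nonneg_left ?_ hκ)
    rw [hresidual, norm_sub_rev w', ← LinearIsometryEquiv.norm_map ContinuousLinearMap.adjoint B]
    exact (norm_sub_le _ _).trans (add_le_add (hF.norm_sub_le _ _) (B.adjoint.le_opNorm _))
  have hCw : 2 * (‖B‖ ^ 2 + κ ^ 2 * L ^ 2) ≤ C * (2 * m) := by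
    rw [← div_le_iff₀ (by positivity), mul_div_mul_left _ _ two_ne_zero]
    exact le_add_of_nonneg_left (by positivity)
  calc ‖v' - vs‖ ^ 2 + ‖π' - πb‖ ^ 2
      ≤ (‖B‖ * ‖w' - ws‖ + ‖π' - π‖) ^ 2
          + (κ * (L * ‖w' - ws‖ + ‖B‖ * ‖v' - v‖)) ^ 2 := by gcongr
    _ ≤ 2 * ((‖B‖ * ‖w' - ws‖) ^ 2 + ‖π' - π‖ ^ 2)
          + κ ^ 2 * (2 * ((L * ‖w' - ws‖) ^ 2 + (‖B‖ * ‖v' - v‖) ^ 2)) := by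
        rw [mul_pow κ]
        gcongr <;> exact add_sq_le
    _ = 2 * κ ^ 2 * ‖B‖ ^ 2 * ‖v' - v‖ ^ 2 + 2 * ‖π' - π‖ ^ 2
          + 2 * (‖B‖ ^ 2 + κ ^ 2 * L ^ 2) * ‖w' - ws‖ ^ 2 := by ring
    _ ≤ C * ‖v' - v‖ ^ 2 + C * ‖π' - π‖ ^ 2 + C * (2 * m) * ‖w' - ws‖ ^ 2 := by
        gcongr
        · rw [hC, add_right_comm]
          exact le_add_of_nonneg_left (by positivity)
        · rw [hC, add_assoc]
          exact le_add_of_nonneg_right (by positivity)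
    _ = C * (‖v' - v‖ ^ 2 + ‖π' - π‖ ^ 2 + 2 * m * ‖w' - ws‖ ^ 2) := by ring

lemma exists_isBigO_pow_of_forall_mem_subdifferential {w : ℕ → H} {v π : ℕ → V} {L : NNReal}
    (hf : StrongConvexOn Set.univ m f) (hm : 0 < m) (hgrad : ∀ w, HasGradientAt f (F w) w)
    (hF : LipschitzWith L F) (hbound : HasHoffmanBound B.adjoint (subdifferential G vs))
    (hs : IsKKT f G B d ws vs πs)
    (hstep : ∀ k, IsADMMStep f G B d (v k) (π k) (w (k + 1)) (v (k + 1)) (π (k + 1)))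
    (hmem : ∀ k, π k ∈ subdifferential G (v k) ∧ π k ∈ subdifferential G vs) :
    ∃ πb, IsKKT f G B d ws vs πb ∧ ∃ ρ ∈ Set.Ioo (0 : ℝ) 1,
      (fun k => (v k - vs, π k - πb)) =O[atTop] fun k => ρ ^ k := by
  obtain ⟨C, hC, herror⟩ := exists_sq_norm_sub_le_of_isADMMStep hgrad hF hm hbound hs
  let S : Set (WithLp 2 (V × V)) := {z | z.fst = vs ∧ IsKKT f G B d ws vs z.snd}
  let z (k : ℕ) : WithLp 2 (V × V) := WithLp.toLp 2 (v k, π k)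
  have sq_dist (k : ℕ) (s : WithLp 2 (V × V)) :
      dist (z k) s ^ 2 = ‖v k - s.fst‖ ^ 2 + ‖π k - s.snd‖ ^ 2 := by
    rw [dist_eq_norm, WithLp.prod_norm_sq_eq_of_L2]
    rfl
  have hclosed : IsClosed S :=
    (isClosed_eq (by fun_prop) continuous_const).inter
      ((isClosed_setOf_isKKT f G B d ws vs).preimage (by fun_prop))
  obtain ⟨s, ⟨hsv, hsπ⟩, ρ, hρ, hrate⟩ := exists_isBigO_pow_of_sq_infDist_le (z := z)
    (D := fun k => ‖v (k + 1) - v k‖ ^ 2 + ‖π (k + 1) - π k‖ ^ 2 + 2 * m * ‖w (k + 1) - ws‖ ^ 2)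
    hclosed ⟨WithLp.toLp 2 (vs, πs), rfl, hs⟩ (fun k => by positivity)
    (fun s ⟨hsv, hsπ⟩ k => by
      rw [sq_dist, sq_dist, hsv]
      exact (hstep k).sq_norm_add_le hf hsπ (hmem k).1) hC fun k => by
      obtain ⟨πb, hπb, hle⟩ := herror (hstep k) (hmem (k + 1)).2
      have hmemS : WithLp.toLp 2 (vs, πb) ∈ S := ⟨rfl, hπb⟩
      exact (pow_le_pow_left₀ Metric.infDist_nonneg (Metric.infDist_le_dist_of_mem hmemS) 2).trans
        ((sq_dist _ _).le.trans hle)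
  refine ⟨s.snd, hsπ, ρ, hρ, .trans (.of_norm_le fun k => ?_) hrate⟩
  rw [← hsv, dist_eq_norm]
  exact max_le (WithLp.norm_fst_le V (z k - s)) (WithLp.norm_snd_le V (z k - s))

lemma tendsto_of_isADMMStep {w : ℕ → H} {v π : ℕ → V} (hf : StrongConvexOn Set.univ m f)
    (hm : 0 < m) (hs : IsKKT f G B d ws vs πs)
    (hstep : ∀ k, IsADMMStep f G B d (v k) (π k) (w (k + 1)) (v (k + 1)) (π (k + 1))) :
    Tendsto v atTop (𝓝 vs) := by
  rw [← tendsto_add_atTop_iff_nat 2]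
  have hdecrease : Tendsto (fun k => ‖v (k + 2) - v (k + 1)‖ ^ 2 + ‖π (k + 2) - π (k + 1)‖ ^ 2
      + 2 * m * ‖w (k + 2) - ws‖ ^ 2) atTop (𝓝 0) :=
    tendsto_zero_of_add_le (u := fun k => ‖v (k + 1) - vs‖ ^ 2 + ‖π (k + 1) - πs‖ ^ 2)
      (fun k => by positivity) (fun k => by positivity)
      fun k => (hstep (k + 1)).sq_norm_add_le hf hs (hstep k).mem_subdifferential
  have hw : Tendsto (fun k => w (k + 2) - ws) atTop (𝓝 0) := by
    refine tendsto_zero_of_sq_norm_le (fun k => ?_) (by simpa using hdecrease.div_const (2 * m))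
    rw [le_div_iff₀' (by positivity : 0 < 2 * m)]
    exact le_add_of_nonneg_left (by positivity)
  have hπ : Tendsto (fun k => π (k + 2) - π (k + 1)) atTop (𝓝 0) :=
    tendsto_zero_of_sq_norm_le (fun k => by
      rw [add_right_comm]
      exact le_add_of_nonneg_left (by positivity)) hdecrease
  have hlim := ((B.continuous.tendsto 0).comp hw).sub hπ
  rw [map_zero, sub_zero] at hlim
  refine tendsto_sub_nhds_zero_iff.1 (hlim.congr fun k => ?_)
  rw [Function.comp_apply, (hstep (k + 1)).map_sub_eq hs, add_sub_cancel_left]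

lemma IsADMMStep.norm_sub_le (hf : StrongConvexOn Set.univ m f) (hm : 0 < m)
    (h : IsADMMStep f G B d v π w' v' π') (hs : IsKKT f G B d ws vs πs)
    (hπ : π ∈ subdifferential G v) : ‖w' - ws‖ ≤ (√m)⁻¹ * ‖(v - vs, π - πs)‖ := by
  rw [le_inv_mul_iff₀ (Real.sqrt_pos.2 hm)]
  refine (abs_le_of_sq_le_sq' ?_ (norm_nonneg _)).2
  have hdecrease := h.sq_norm_add_le hf hs hπ
  have hv : ‖v - vs‖ ^ 2 ≤ ‖(v - vs, π - πs)‖ ^ 2 := by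
    gcongr
    exact norm_fst_le (v - vs, π - πs)
  have hππ : ‖π - πs‖ ^ 2 ≤ ‖(v - vs, π - πs)‖ ^ 2 := by
    gcongr
    exact norm_snd_le (v - vs, π - πs)
  rw [mul_pow, Real.sq_sqrt hm.le]
  linarith [sq_nonneg ‖v' - vs‖, sq_nonneg ‖π' - πs‖, sq_nonneg ‖v' - v‖, sq_nonneg ‖π' - π‖]

theorem exists_isBigO_pow_of_isADMMStep {w : ℕ → H} {v π : ℕ → V} {L : NNReal}
    (hf : StrongConvexOn Set.univ m f) (hm : 0 < m) (hgrad : ∀ w, HasGradientAt f (F w) w)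
    (hF : LipschitzWith L F) (hG : ∀ᶠ z in 𝓝 vs, subdifferential G z ⊆ subdifferential G vs)
    (hbound : HasHoffmanBound B.adjoint (subdifferential G vs)) (hs : IsKKT f G B d ws vs πs)
    (hstep : ∀ k, IsADMMStep f G B d (v k) (π k) (w (k + 1)) (v (k + 1)) (π (k + 1))) :
    ∃ πb, IsKKT f G B d ws vs πb ∧ ∃ ρ ∈ Set.Ioo (0 : ℝ) 1,
      (fun k => (w k - ws, v k - vs, π k - πb)) =O[atTop] fun k => ρ ^ k := by
  have hmem : ∀ᶠ k in atTop, π k ∈ subdifferential G (v k) := by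
    filter_upwards [eventually_ne_atTop 0] with k hk
    obtain ⟨k, rfl⟩ := Nat.exists_eq_succ_of_ne_zero hk
    exact (hstep k).mem_subdifferential
  have hincl := (tendsto_of_isADMMStep hf hm hs hstep).eventually hG
  obtain ⟨N, hN⟩ := eventually_atTop.1 (hmem.and hincl)
  obtain ⟨πb, hπb, ρ, hρ, htail⟩ := exists_isBigO_pow_of_forall_mem_subdifferential
    (w := fun k => w (N + k)) (v := fun k => v (N + k)) (π := fun k => π (N + k))
    hf hm hgrad hF hbound hs (fun k => hstep (N + k)) fun k =>
      have h := hN (N + k) (Nat.le_add_right N k)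
      ⟨h.1, h.2 h.1⟩
  have hvπ : (fun k => (v k - vs, π k - πb)) =O[atTop] fun k => ρ ^ k :=
    isBigO_pow_of_comp_nat_add hρ.1.ne' N htail
  have hw : (fun k => w k - ws) =O[atTop] fun k => ρ ^ k := by
    refine isBigO_pow_of_comp_nat_add hρ.1.ne' 1 (.trans (.of_bound (√m)⁻¹ ?_) hvπ)
    filter_upwards [hmem] with k hk
    rw [add_comm 1 k]
    exact (hstep k).norm_sub_le hf hm hπb hk
  exact ⟨πb, hπb, ρ, hρ, hw.prod_left hvπ⟩

end ADMM

section SeparableSum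

variable {ι : Type*} [Fintype ι]

/-- The separable function `v ↦ ∑ i, g i (v i)` on Euclidean space. -/
def separableSum (g : ι → ℝ → ℝ) (v : EuclideanSpace ℝ ι) : ℝ := ∑ i, g i (v i)

variable {g : ι → ℝ → ℝ} {v s : EuclideanSpace ℝ ι}

lemma mem_subdifferential_separableSum_iff :
    s ∈ subdifferential (separableSum g) v ↔ ∀ i, s i ∈ subdifferential (g i) (v i) := by
  classical
  constructor
  · intro hs i t
    have hle := hs (WithLp.toLp 2 (Function.update v i t))
    rw [PiLp.inner_apply, separableSum, separableSum, ← Finset.sum_add_distrib, ← sub_nonneg,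
      ← Finset.sum_sub_distrib, Fintype.sum_eq_single i fun j hj => by simp [hj]] at hle
    simpa using hle
  · intro hs y
    rw [PiLp.inner_apply, separableSum, separableSum, ← Finset.sum_add_distrib]
    exact Finset.sum_le_sum fun i _ => hs i (y i)

lemma convexOn_separableSum (hg : ∀ i, ConvexOn ℝ Set.univ (g i)) :
    ConvexOn ℝ Set.univ (separableSum g) := by
  refine ⟨convex_univ, fun x _ y _ a b ha hb hab => ?_⟩
  simp only [separableSum, smul_eq_mul, Finset.mul_sum, ← Finset.sum_add_distrib]
  exact Finset.sum_le_sum fun i _ => (hg i).2 trivial trivial ha hb hab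

lemma eventually_subdifferential_separableSum_subset
    (hg : ∀ i, ∀ c : ℝ, 0 ≤ c → ∀ x, g i (c • x) = c * g i x) (v : EuclideanSpace ℝ ι) :
    ∀ᶠ z in 𝓝 v, subdifferential (separableSum g) z ⊆ subdifferential (separableSum g) v := by
  have hcoord : ∀ᶠ z in 𝓝 v, ∀ i, subdifferential (g i) (z i) ⊆ subdifferential (g i) (v i) :=
    eventually_all.2 fun i =>
      (EuclideanSpace.proj (𝕜 := ℝ) i).continuous.continuousAt.eventually
        (eventually_subdifferential_subset_of_posHom (hg i) (v i))
  filter_upwards [hcoord] with z hz s hs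
  rw [mem_subdifferential_separableSum_iff] at hs ⊢
  exact fun i => hz i (hs i)

lemma hasHoffmanBound_subdifferential_separableSum {F : Type*} [NormedAddCommGroup F]
    [NormedSpace ℝ F] (T : EuclideanSpace ℝ ι →L[ℝ] F) (g : ι → ℝ → ℝ) (v : EuclideanSpace ℝ ι) :
    HasHoffmanBound T (subdifferential (separableSum g) v) := by
  have hbox : subdifferential (separableSum g) v = {s | ∀ i, s i ∈ subdifferential (g i) (v i)} :=
    Set.ext fun s => mem_subdifferential_separableSum_iff
  rw [hbox]
  exact hasHoffmanBound_box T fun i => (convex_subdifferential (g i) (v i)).ordConnected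

end SeparableSum

section HalfSqNorm

variable {H : Type*} [NormedAddCommGroup H] [InnerProductSpace ℝ H]

lemma strongConvexOn_half_sq_norm :
    StrongConvexOn Set.univ 1 fun w : H => ‖w‖ ^ 2 / 2 := by
  rw [strongConvexOn_iff_convex]
  exact (convexOn_const 0 convex_univ).congr fun w _ => by ring

lemma hasGradientAt_half_sq_norm [CompleteSpace H] (w : H) :
    HasGradientAt (fun w : H => ‖w‖ ^ 2 / 2) w w := by
  simp_rw [div_eq_mul_inv]
  refine ((hasStrictFDerivAt_norm_sq w).hasFDerivAt.mul_const (2 : ℝ)⁻¹).congr_fderiv ?_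
  ext y
  simp

end HalfSqNorm

section Scale

variable {ι : Type*} {r : ι → ℝ} {g : ι → ℝ → ℝ}

/-- The identification of `ι → ℝ`, carrying the inner product with weights `r`, with Euclidean
space: the `i`-th coordinate is multiplied by `√(r i)`. -/
noncomputable def scale (hr : ∀ i, 0 < r i) : (ι → ℝ) ≃ₗ[ℝ] EuclideanSpace ℝ ι :=
  (LinearEquiv.piCongrRight fun i =>
    LinearEquiv.smulOfNeZero ℝ ℝ (√(r i)) (Real.sqrt_pos.2 (hr i)).ne') ≪≫ₗ
    (WithLp.linearEquiv 2 ℝ (ι → ℝ)).symm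

lemma scale_apply (hr : ∀ i, 0 < r i) (v : ι → ℝ) (i : ι) : scale hr v i = √(r i) * v i := rfl

/-- The inverse transpose of `scale hr`, by which multipliers are rescaled. -/
noncomputable def dualScale (hr : ∀ i, 0 < r i) : (ι → ℝ) ≃ₗ[ℝ] EuclideanSpace ℝ ι :=
  scale (r := r⁻¹) fun i => inv_pos.2 (hr i)

lemma dualScale_apply (hr : ∀ i, 0 < r i) (π : ι → ℝ) (i : ι) :
    dualScale hr π i = (√(r i))⁻¹ * π i := by
  rw [dualScale, scale_apply, Pi.inv_apply, Real.sqrt_inv]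

lemma dualScale_mul (hr : ∀ i, 0 < r i) (v : ι → ℝ) : dualScale hr (r * v) = scale hr v := by
  ext i
  rw [dualScale_apply, scale_apply, Pi.mul_apply, ← mul_assoc, inv_mul_eq_div, Real.div_sqrt]

/-- The summands of the nonsmooth term in the rescaled variables. -/
noncomputable def scaledSummand (r : ι → ℝ) (g : ι → ℝ → ℝ) (i : ι) (t : ℝ) : ℝ :=
  g i ((√(r i))⁻¹ * t)

lemma convexOn_scaledSummand {i : ι} (hg : ConvexOn ℝ Set.univ (g i)) (r : ι → ℝ) :
    ConvexOn ℝ Set.univ (scaledSummand r g i) :=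
  hg.comp_linearMap (LinearMap.mulLeft ℝ (√(r i))⁻¹)

lemma scaledSummand_smul {i : ι} (hg : ∀ a : ℝ, 0 ≤ a → ∀ t, g i (a • t) = a * g i t) (r : ι → ℝ)
    (a : ℝ) (ha : 0 ≤ a) (t : ℝ) : scaledSummand r g i (a • t) = a * scaledSummand r g i t := by
  rw [scaledSummand, mul_smul_comm, hg a ha, scaledSummand]

variable [Fintype ι]

lemma sq_norm_scale (hr : ∀ i, 0 < r i) (v : ι → ℝ) :
    ‖scale hr v‖ ^ 2 = ∑ i, r i * v i ^ 2 := by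
  simp only [EuclideanSpace.norm_sq_eq, scale_apply, Real.norm_eq_abs, sq_abs, mul_pow,
    Real.sq_sqrt (hr _).le]

lemma inner_dualScale_scale (hr : ∀ i, 0 < r i) (π v : ι → ℝ) :
    ⟪dualScale hr π, scale hr v⟫_ℝ = ∑ i, π i * v i := by
  refine Finset.sum_congr rfl fun i _ => ?_
  have hne := (Real.sqrt_pos.2 (hr i)).ne'
  rw [dualScale_apply, scale_apply, RCLike.inner_apply, RCLike.conj_to_real]
  field_simp

lemma separableSum_scaledSummand (hr : ∀ i, 0 < r i) (g : ι → ℝ → ℝ) (v : ι → ℝ) :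
    separableSum (scaledSummand r g) (scale hr v) = ∑ i, g i (v i) :=
  Finset.sum_congr rfl fun i _ => by
    rw [scaledSummand, scale_apply, inv_mul_cancel_left₀ (Real.sqrt_pos.2 (hr i)).ne']

end Scale

section CoordinateADMM

variable {κ ι : Type*} [Fintype κ] [Fintype ι]

/-- The Lagrangian of the problem of minimizing `½ ∑ i, c i * x i ^ 2 + ∑ i, g i (v i)` subject to
`v = M x + d`. -/
noncomputable def coordLagrangian (c : κ → ℝ) (g : ι → ℝ → ℝ) (M : (κ → ℝ) →ₗ[ℝ] ι → ℝ)
    (d : ι → ℝ) (x : κ → ℝ) (v π : ι → ℝ) : ℝ :=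
  (∑ i, c i * x i ^ 2) / 2 + ∑ i, g i (v i) + ∑ i, π i * (M x + d - v) i

/-- The Lagrangian `coordLagrangian`, augmented by the quadratic penalty which weights the `i`-th
constraint by `r i`. -/
noncomputable def coordAugLagrangian (c : κ → ℝ) (r : ι → ℝ) (g : ι → ℝ → ℝ)
    (M : (κ → ℝ) →ₗ[ℝ] ι → ℝ) (d : ι → ℝ) (x : κ → ℝ) (v π : ι → ℝ) : ℝ :=
  coordLagrangian c g M d x v π + (∑ i, r i * (M x + d - v) i ^ 2) / 2

/-- Primal-dual optimality of `(x, v, π)` when `x` is restricted to the subspace `K`. For feasible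
`(x, v)` the Lagrangian does not depend on the multiplier, so this says that `(x, v, π)` is a saddle
point. -/
structure IsCoordSaddle (K : Submodule ℝ (κ → ℝ)) (c : κ → ℝ) (g : ι → ℝ → ℝ)
    (M : (κ → ℝ) →ₗ[ℝ] ι → ℝ) (d : ι → ℝ) (x : κ → ℝ) (v π : ι → ℝ) : Prop where
  mem : x ∈ K
  feasible : v = M x + d
  isMin : ∀ x' ∈ K, ∀ v', coordLagrangian c g M d x v π ≤ coordLagrangian c g M d x' v' π

/-- One step of ADMM in coordinates, from the splitting variable `v` and multiplier `π` to
`(x', v', π')`. -/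
structure IsCoordADMMStep (K : Submodule ℝ (κ → ℝ)) (c : κ → ℝ) (r : ι → ℝ) (g : ι → ℝ → ℝ)
    (M : (κ → ℝ) →ₗ[ℝ] ι → ℝ) (d : ι → ℝ) (v π : ι → ℝ) (x' : κ → ℝ) (v' π' : ι → ℝ) : Prop where
  mem : x' ∈ K
  isMin_fst : ∀ y ∈ K, coordAugLagrangian c r g M d x' v π ≤ coordAugLagrangian c r g M d y v π
  isMin_snd : ∀ y, coordAugLagrangian c r g M d x' v' π ≤ coordAugLagrangian c r g M d x' y π
  dual_update : π' = π + r * (M x' + d - v')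

variable {K : Submodule ℝ (κ → ℝ)} {c : κ → ℝ} {r : ι → ℝ} {g : ι → ℝ → ℝ}
  {M : (κ → ℝ) →ₗ[ℝ] ι → ℝ} {d v π v' π' : ι → ℝ} {x x' : κ → ℝ}

/-- The primal change of variables. -/
noncomputable def scaleOn (hc : ∀ i, 0 < c i) (K : Submodule ℝ (κ → ℝ)) :
    K ≃L[ℝ] K.map (scale hc : (κ → ℝ) →ₗ[ℝ] EuclideanSpace ℝ κ) :=
  ((scale hc).submoduleMap K).toContinuousLinearEquiv

/-- The constraint map in the rescaled variables. -/
noncomputable def scaledMap (hc : ∀ i, 0 < c i) (hr : ∀ i, 0 < r i) (K : Submodule ℝ (κ → ℝ))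
    (M : (κ → ℝ) →ₗ[ℝ] ι → ℝ) :
    K.map (scale hc : (κ → ℝ) →ₗ[ℝ] EuclideanSpace ℝ κ) →L[ℝ] EuclideanSpace ℝ ι :=
  LinearMap.toContinuousLinearMap
    ((scale hr).toLinearMap ∘ₗ M ∘ₗ K.subtype ∘ₗ (scaleOn hc K).symm.toLinearMap)

lemma scaledMap_scaleOn (hc : ∀ i, 0 < c i) (hr : ∀ i, 0 < r i) (hx : x ∈ K) (v : ι → ℝ) :
    scaledMap hc hr K M (scaleOn hc K ⟨x, hx⟩) + scale hr d - scale hr v =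
      scale hr (M x + d - v) := by
  simp [scaledMap]

lemma lagrangian_scale (hc : ∀ i, 0 < c i) (hr : ∀ i, 0 < r i) (hx : x ∈ K) :
    lagrangian (fun w => ‖w‖ ^ 2 / 2) (separableSum (scaledSummand r g)) (scaledMap hc hr K M)
      (scale hr d) (scaleOn hc K ⟨x, hx⟩) (scale hr v) (dualScale hr π) =
    coordLagrangian c g M d x v π := by
  have hnorm : ‖scaleOn hc K ⟨x, hx⟩‖ ^ 2 = ∑ i, c i * x i ^ 2 := sq_norm_scale hc x
  rw [lagrangian, hnorm, separableSum_scaledSummand, scaledMap_scaleOn, inner_dualScale_scale,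
    coordLagrangian]

lemma augLagrangian_scale (hc : ∀ i, 0 < c i) (hr : ∀ i, 0 < r i) (hx : x ∈ K) :
    augLagrangian (fun w => ‖w‖ ^ 2 / 2) (separableSum (scaledSummand r g)) (scaledMap hc hr K M)
      (scale hr d) (scaleOn hc K ⟨x, hx⟩) (scale hr v) (dualScale hr π) =
    coordAugLagrangian c r g M d x v π := by
  rw [augLagrangian, lagrangian_scale, scaledMap_scaleOn, sq_norm_scale, coordAugLagrangian]

lemma isKKT_scale_iff (hc : ∀ i, 0 < c i) (hr : ∀ i, 0 < r i) (hx : x ∈ K) :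
    IsKKT (fun w => ‖w‖ ^ 2 / 2) (separableSum (scaledSummand r g)) (scaledMap hc hr K M)
      (scale hr d) (scaleOn hc K ⟨x, hx⟩) (scale hr v) (dualScale hr π) ↔
    IsCoordSaddle K c g M d x v π := by
  have hfeasible : scale hr v = scaledMap hc hr K M (scaleOn hc K ⟨x, hx⟩) + scale hr d ↔
      v = M x + d := by
    rw [eq_comm, ← sub_eq_zero, scaledMap_scaleOn, map_eq_zero_iff _ (scale hr).injective,
      sub_eq_zero, eq_comm]
  rw [isKKT_iff, hfeasible, (scaleOn hc K).surjective.forall]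
  simp only [Subtype.forall, (scale hr).surjective.forall, lagrangian_scale]
  exact ⟨fun h => ⟨hx, h.1, h.2⟩, fun h => ⟨h.2, h.3⟩⟩

lemma IsCoordADMMStep.isADMMStep (hc : ∀ i, 0 < c i) (hr : ∀ i, 0 < r i)
    (hg : ∀ i, ConvexOn ℝ Set.univ (g i)) (h : IsCoordADMMStep K c r g M d v π x' v' π') :
    IsADMMStep (fun w => ‖w‖ ^ 2 / 2) (separableSum (scaledSummand r g)) (scaledMap hc hr K M)
      (scale hr d) (scale hr v) (dualScale hr π) (scaleOn hc K ⟨x', h.mem⟩) (scale hr v')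
      (dualScale hr π') := by
  refine .of_forall_augLagrangian_le (strongConvexOn_half_sq_norm.convexOn fun r => by positivity)
    (convexOn_separableSum fun i => convexOn_scaledSummand (hg i) r) ?_ ?_ ?_
  · simp only [(scaleOn hc K).surjective.forall, Subtype.forall, augLagrangian_scale]
    exact h.isMin_fst
  · simp only [(scale hr).surjective.forall, augLagrangian_scale]
    exact h.isMin_snd
  · rw [scaledMap_scaleOn, ← dualScale_mul, ← map_add, h.dual_update]

lemma isBigO_sub_of_isBigO_map_sub {E F : Type*} [NormedAddCommGroup E] [NormedSpace ℝ E]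
    [NormedAddCommGroup F] [NormedSpace ℝ F] (e : E ≃L[ℝ] F) {u : ℕ → E} {s : E} {f : ℕ → ℝ}
    (h : (fun k => e (u k) - e s) =O[atTop] f) : (fun k => u k - s) =O[atTop] f := by
  simp only [← map_sub] at h
  exact (e.isBigO_comp_rev _ _).trans h

theorem exists_isBigO_pow_of_isCoordADMMStep {x : ℕ → κ → ℝ} {v π : ℕ → ι → ℝ} {xs : κ → ℝ}
    {vs πs : ι → ℝ} (hc : ∀ i, 0 < c i) (hr : ∀ i, 0 < r i) (hg : ∀ i, ConvexOn ℝ Set.univ (g i))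
    (hhom : ∀ i, ∀ a : ℝ, 0 ≤ a → ∀ t, g i (a • t) = a * g i t)
    (hs : IsCoordSaddle K c g M d xs vs πs)
    (hstep : ∀ k, IsCoordADMMStep K c r g M d (v k) (π k) (x (k + 1)) (v (k + 1)) (π (k + 1))) :
    ∃ πb, IsCoordSaddle K c g M d xs vs πb ∧ ∃ ρ ∈ Set.Ioo (0 : ℝ) 1,
      (fun k => (x k - xs, v k - vs, π k - πb)) =O[atTop] fun k => ρ ^ k := by
  let x' : ℕ → K := fun | 0 => 0 | k + 1 => ⟨x (k + 1), (hstep k).mem⟩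
  obtain ⟨πb, hπb, ρ, hρ, hrate⟩ := exists_isBigO_pow_of_isADMMStep
    (w := fun k => scaleOn hc K (x' k))
    strongConvexOn_half_sq_norm one_pos hasGradientAt_half_sq_norm LipschitzWith.id
    (eventually_subdifferential_separableSum_subset (fun i => scaledSummand_smul (hhom i) r) _)
    (hasHoffmanBound_subdifferential_separableSum _ _ _)
    ((isKKT_scale_iff hc hr hs.mem).2 hs) fun k => (hstep k).isADMMStep hc hr hg
  obtain ⟨πb, rfl⟩ := (dualScale hr).surjective πb
  obtain ⟨hx', hvπ⟩ := Asymptotics.isBigO_prod_left.1 hrate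
  obtain ⟨hv, hπ⟩ := Asymptotics.isBigO_prod_left.1 hvπ
  have hx : (fun k => x k - xs) =O[atTop] fun k => ρ ^ k := by
    refine .trans (.of_norm_eventuallyLE ?_)
      (isBigO_sub_of_isBigO_map_sub (scaleOn hc K) hx').norm_left
    filter_upwards [eventually_ne_atTop 0] with k hk
    obtain ⟨k, rfl⟩ := Nat.exists_eq_succ_of_ne_zero hk
    rfl
  exact ⟨πb, (isKKT_scale_iff hc hr hs.mem).1 hπb, ρ, hρ, hx.prod_left
    ((isBigO_sub_of_isBigO_map_sub (scale hr).toContinuousLinearEquiv hv).prod_left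
      (isBigO_sub_of_isBigO_map_sub (dualScale hr).toContinuousLinearEquiv hπ))⟩

end CoordinateADMM

section GeometricBound

lemma exists_sqrt_sum_sq_le_of_isBigO {ι : Type*} [Fintype ι] {u : ℕ → ι → ℝ} {ρ : ℝ} (hρ : 0 < ρ)
    (h : u =O[atTop] fun k => ρ ^ k) : ∃ C, 0 < C ∧ ∀ k, √(∑ i, u k i ^ 2) ≤ C * ρ ^ k := by
  obtain ⟨C, hC, hbound⟩ := Asymptotics.bound_of_isBigO_nat_atTop
    (((PiLp.continuousLinearEquiv 2 ℝ fun _ : ι => ℝ).symm.isBigO_comp u atTop).trans h)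
  refine ⟨C, hC, fun k => ?_⟩
  have hk := hbound (pow_ne_zero k hρ.ne')
  rw [EuclideanSpace.norm_eq, Real.norm_of_nonneg (by positivity)] at hk
  simp only [Real.norm_eq_abs, sq_abs] at hk
  exact hk

lemma isBigO_sumElim {α β : Type*} [Fintype α] [Fintype β] {u : ℕ → α → ℝ} {v : ℕ → β → ℝ}
    {f : ℕ → ℝ} (hu : u =O[atTop] f) (hv : v =O[atTop] f) :
    (fun k => Sum.elim (u k) (v k)) =O[atTop] f :=
  Asymptotics.isBigO_pi.2 fun
    | .inl i => Asymptotics.isBigO_pi.1 hu i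
    | .inr i => Asymptotics.isBigO_pi.1 hv i

end GeometricBound

section ElasticNet

variable {m q l : Type*}

/-- The vector formed by the entries of a matrix and of a vector. -/
def packMatrixVec (W : Matrix q l ℝ) (b : l → ℝ) : (q × l) ⊕ l → ℝ :=
  Sum.elim (fun ij => W ij.1 ij.2) b

/-- The vector formed by the entries of two matrices. -/
def packMatrices (A : Matrix m l ℝ) (U : Matrix q l ℝ) : (m × l) ⊕ (q × l) → ℝ :=
  Sum.elim (fun ij => A ij.1 ij.2) fun ij => U ij.1 ij.2

lemma forall_packMatrixVec {P : ((q × l) ⊕ l → ℝ) → Prop} :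
    (∀ x, P x) ↔ ∀ W b, P (packMatrixVec W b) :=
  ⟨fun h _ _ => h _, fun h x =>
    Sum.elim_comp_inl_inr x ▸ h (Function.curry (x ∘ Sum.inl)) (x ∘ Sum.inr)⟩

lemma forall_packMatrices {P : ((m × l) ⊕ (q × l) → ℝ) → Prop} :
    (∀ v, P v) ↔ ∀ A U, P (packMatrices A U) :=
  ⟨fun h _ _ => h _, fun h v =>
    Sum.elim_comp_inl_inr v ▸ h (Function.curry (v ∘ Sum.inl)) (Function.curry (v ∘ Sum.inr))⟩

lemma exists_eq_packMatrices (v : (m × l) ⊕ (q × l) → ℝ) : ∃ A U, v = packMatrices A U :=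
  forall_packMatrices (P := fun v => ∃ A U, v = packMatrices A U).2 (fun A U => ⟨A, U, rfl⟩) v

lemma packMatrices_eq_zero_iff {A : Matrix m l ℝ} {U : Matrix q l ℝ} :
    packMatrices A U = 0 ↔ A = 0 ∧ U = 0 := by
  simp only [packMatrices, funext_iff, Sum.forall, Prod.forall, ← Matrix.ext_iff]
  rfl

/-- The nonsmooth terms of the elastic-net objective: hinge terms with weights `s * c i j` for the
entries of `A`, and `ℓ¹` terms for the entries of `U`. -/
def elasticNetTerm (c : Matrix m l ℝ) (s lam1 : ℝ) : (m × l) ⊕ (q × l) → ℝ → ℝ :=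
  Sum.elim (fun ij t => s * c ij.1 ij.2 * max t 0) fun _ t => lam1 * |t|

lemma convexOn_elasticNetTerm {c : Matrix m l ℝ} {s lam1 : ℝ} (hc : ∀ i j, 0 ≤ c i j) (hs : 0 ≤ s)
    (hlam1 : 0 ≤ lam1) (i : (m × l) ⊕ (q × l)) :
    ConvexOn ℝ Set.univ (elasticNetTerm c s lam1 i) := by
  rcases i with ⟨i, j⟩ | _
  · exact ((convexOn_id convex_univ).sup (convexOn_const 0 convex_univ)).smul
      (mul_nonneg hs (hc i j))
  · exact (convexOn_norm convex_univ).smul hlam1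

lemma elasticNetTerm_smul (c : Matrix m l ℝ) (s lam1 : ℝ) (i : (m × l) ⊕ (q × l)) {a : ℝ}
    (ha : 0 ≤ a) (t : ℝ) :
    elasticNetTerm c s lam1 i (a • t) = a * elasticNetTerm c s lam1 i t := by
  rcases i with _ | _
  · simp only [elasticNetTerm, Sum.elim_inl, smul_eq_mul]
    rw [← mul_zero a, ← mul_max_of_nonneg _ _ ha, mul_zero, mul_left_comm]
  · simp only [elasticNetTerm, Sum.elim_inr, smul_eq_mul, abs_mul, abs_of_nonneg ha]
    exact mul_left_comm _ _ _

/-- The pairs `(W, b)` with `W e = 0` and `eᵀ b = 0`. -/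
def sumZero (q l : Type*) [Fintype l] : Submodule ℝ ((q × l) ⊕ l → ℝ) where
  carrier := {x | (∀ g, ∑ j, x (.inl (g, j)) = 0) ∧ ∑ j, x (.inr j) = 0}
  add_mem' hx hy := by
    simp only [Set.mem_ofPred_eq] at hx hy
    simp [Finset.sum_add_distrib, hx, hy]
  zero_mem' := by simp
  smul_mem' a x hx := by
    simp only [Set.mem_ofPred_eq] at hx
    simp [← Finset.mul_sum, hx]

lemma packMatrixVec_mem_sumZero [Fintype l] {W : Matrix q l ℝ} {b : l → ℝ} :
    packMatrixVec W b ∈ sumZero q l ↔ (∀ g, ∑ j, W g j = 0) ∧ ∑ j, b j = 0 :=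
  Iff.rfl

variable [Fintype q]

/-- The linear part `(W, b) ↦ (Xᵀ W + e bᵀ, W)` of the constraints. -/
def constraintMap (l : Type*) (X : Matrix q m ℝ) :
    ((q × l) ⊕ l → ℝ) →ₗ[ℝ] (m × l) ⊕ (q × l) → ℝ where
  toFun x := Sum.elim (fun ij => ∑ g, X g ij.1 * x (.inl (g, ij.2)) + x (.inr ij.2))
    fun gj => x (.inl gj)
  map_add' x y := by
    ext (ij | gj)
    · simp only [Pi.add_apply, Sum.elim_inl, mul_add, Finset.sum_add_distrib]
      ring
    · rfl
  map_smul' t x := by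
    ext (ij | gj)
    · simp only [Pi.smul_apply, Sum.elim_inl, smul_eq_mul, mul_left_comm _ t, ← Finset.mul_sum,
        mul_add, RingHom.id_apply]
    · rfl

/-- The constant part `(E, 0)` of the constraints, where all entries of `E` are `1`. -/
def elasticNetOffset (m q l : Type*) : (m × l) ⊕ (q × l) → ℝ :=
  Sum.elim 1 0

/-- The matrix `Xᵀ W + e bᵀ + E` to which the constraint equates `A`. -/
def scoreMatrix (X : Matrix q m ℝ) (W : Matrix q l ℝ) (b : l → ℝ) : Matrix m l ℝ :=
  Matrix.of fun i j => (∑ g, X g i * W g j) + b j + 1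

variable {X : Matrix q m ℝ} {W : Matrix q l ℝ} {b : l → ℝ} {A : Matrix m l ℝ} {U : Matrix q l ℝ}

lemma constraintMap_packMatrixVec_add_sub :
    constraintMap l X (packMatrixVec W b) + elasticNetOffset m q l - packMatrices A U =
      packMatrices (scoreMatrix X W b - A) (W - U) := by
  ext (⟨i, j⟩ | ⟨g, j⟩)
  · rfl
  · simp [constraintMap, elasticNetOffset, packMatrixVec, packMatrices]

lemma packMatrices_eq_constraint_iff :
    packMatrices A U = constraintMap l X (packMatrixVec W b) + elasticNetOffset m q l ↔
      A = scoreMatrix X W b ∧ U = W := by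
  rw [eq_comm, ← sub_eq_zero, constraintMap_packMatrixVec_add_sub, packMatrices_eq_zero_iff,
    sub_eq_zero, sub_eq_zero, eq_comm, eq_comm (a := W)]

variable [Fintype l] [Fintype m]

/-- The Lagrangian of the elastic-net splitting, for hinge weights `s * c i j`. -/
noncomputable def elasticNetLagrangian (X : Matrix q m ℝ) (c : Matrix m l ℝ)
    (s lam1 lam2 lam3 : ℝ) (W : Matrix q l ℝ) (b : l → ℝ) (A : Matrix m l ℝ) (U : Matrix q l ℝ)
    (P : Matrix m l ℝ) (L : Matrix q l ℝ) : ℝ :=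
  s * (∑ i, ∑ j, c i j * max (A i j) 0) + lam1 * (∑ g, ∑ j, |U g j|)
    + lam2 / 2 * (∑ g, ∑ j, W g j ^ 2) + lam3 / 2 * (∑ j, b j ^ 2)
    + (∑ i, ∑ j, P i j * (scoreMatrix X W b i j - A i j))
    + (∑ g, ∑ j, L g j * (W g j - U g j))

/-- The augmented Lagrangian of the elastic-net splitting, with penalties `α` and `μ`. -/
noncomputable def elasticNetAugLagrangian (X : Matrix q m ℝ) (c : Matrix m l ℝ)
    (s lam1 lam2 lam3 α μ : ℝ) (W : Matrix q l ℝ) (b : l → ℝ) (A : Matrix m l ℝ) (U : Matrix q l ℝ)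
    (P : Matrix m l ℝ) (L : Matrix q l ℝ) : ℝ :=
  elasticNetLagrangian X c s lam1 lam2 lam3 W b A U P L
    + α / 2 * (∑ i, ∑ j, (scoreMatrix X W b i j - A i j) ^ 2)
    + μ / 2 * (∑ g, ∑ j, (W g j - U g j) ^ 2)

variable {c : Matrix m l ℝ} {s lam1 lam2 lam3 α μ : ℝ} {P : Matrix m l ℝ} {L : Matrix q l ℝ}

lemma coordLagrangian_pack :
    coordLagrangian (Sum.elim (fun _ => lam2) fun _ => lam3) (elasticNetTerm c s lam1)
      (constraintMap l X) (elasticNetOffset m q l) (packMatrixVec W b) (packMatrices A U)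
      (packMatrices P L) =
    elasticNetLagrangian X c s lam1 lam2 lam3 W b A U P L := by
  rw [coordLagrangian, constraintMap_packMatrixVec_add_sub]
  simp only [elasticNetTerm, packMatrixVec, packMatrices, Fintype.sum_sum_type,
    Fintype.sum_prod_type, Sum.elim_inl, Sum.elim_inr,
    Matrix.sub_apply, mul_assoc, ← Finset.mul_sum, elasticNetLagrangian]
  ring

lemma coordAugLagrangian_pack :
    coordAugLagrangian (Sum.elim (fun _ => lam2) fun _ => lam3) (Sum.elim (fun _ => α) fun _ => μ)
      (elasticNetTerm c s lam1) (constraintMap l X) (elasticNetOffset m q l) (packMatrixVec W b)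
      (packMatrices A U) (packMatrices P L) =
    elasticNetAugLagrangian X c s lam1 lam2 lam3 α μ W b A U P L := by
  rw [coordAugLagrangian, coordLagrangian_pack, constraintMap_packMatrixVec_add_sub]
  simp only [packMatrices, Fintype.sum_sum_type, Fintype.sum_prod_type, Sum.elim_inl, Sum.elim_inr,
    Matrix.sub_apply, ← Finset.mul_sum, elasticNetAugLagrangian]
  ring

lemma isCoordSaddle_pack_iff :
    IsCoordSaddle (sumZero q l) (Sum.elim (fun _ => lam2) fun _ => lam3)
      (elasticNetTerm c s lam1) (constraintMap l X) (elasticNetOffset m q l) (packMatrixVec W b)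
      (packMatrices A U) (packMatrices P L) ↔
    ((∀ g, ∑ j, W g j = 0) ∧ ∑ j, b j = 0) ∧ A = scoreMatrix X W b ∧ U = W ∧
      (∀ P' L', elasticNetLagrangian X c s lam1 lam2 lam3 W b A U P' L' ≤
        elasticNetLagrangian X c s lam1 lam2 lam3 W b A U P L) ∧
      ∀ W' b' A' U', ((∀ g, ∑ j, W' g j = 0) ∧ ∑ j, b' j = 0) →
        elasticNetLagrangian X c s lam1 lam2 lam3 W b A U P L ≤
          elasticNetLagrangian X c s lam1 lam2 lam3 W' b' A' U' P L := by
  constructor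
  · rintro ⟨hmem, hfeasible, hmin⟩
    obtain ⟨rfl, rfl⟩ := packMatrices_eq_constraint_iff.1 hfeasible
    refine ⟨hmem, rfl, rfl, fun P' L' => ?_, fun W' b' A' U' h => ?_⟩
    · simp [elasticNetLagrangian]
    · simpa only [coordLagrangian_pack] using hmin (packMatrixVec W' b') h (packMatrices A' U')
  · rintro ⟨hmem, hA, hU, -, hmin⟩
    refine ⟨hmem, packMatrices_eq_constraint_iff.2 ⟨hA, hU⟩, ?_⟩
    simpa only [forall_packMatrixVec, forall_packMatrices, packMatrixVec_mem_sumZero,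
      coordLagrangian_pack] using
      fun W' b' h A' U' => hmin W' b' A' U' h

lemma isCoordADMMStep_pack {W' : Matrix q l ℝ} {b' : l → ℝ} {A' : Matrix m l ℝ}
    {U' : Matrix q l ℝ} {P' : Matrix m l ℝ} {L' : Matrix q l ℝ}
    (hmem : (∀ g, ∑ j, W' g j = 0) ∧ ∑ j, b' j = 0)
    (hfst : ∀ W b, ((∀ g, ∑ j, W g j = 0) ∧ ∑ j, b j = 0) →
      elasticNetAugLagrangian X c s lam1 lam2 lam3 α μ W' b' A U P L ≤
        elasticNetAugLagrangian X c s lam1 lam2 lam3 α μ W b A U P L)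
    (hsnd : ∀ A U, elasticNetAugLagrangian X c s lam1 lam2 lam3 α μ W' b' A' U' P L ≤
      elasticNetAugLagrangian X c s lam1 lam2 lam3 α μ W' b' A U P L)
    (hP : P' = Matrix.of fun i j => P i j + α * (scoreMatrix X W' b' i j - A' i j))
    (hL : L' = Matrix.of fun g j => L g j + μ * (W' g j - U' g j)) :
    IsCoordADMMStep (sumZero q l) (Sum.elim (fun _ => lam2) fun _ => lam3)
      (Sum.elim (fun _ => α) fun _ => μ) (elasticNetTerm c s lam1) (constraintMap l X)
      (elasticNetOffset m q l) (packMatrices A U) (packMatrices P L) (packMatrixVec W' b')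
      (packMatrices A' U') (packMatrices P' L') where
  mem := hmem
  isMin_fst := forall_packMatrixVec.2 fun W b h => by
    simpa only [coordAugLagrangian_pack] using hfst W b h
  isMin_snd := forall_packMatrices.2 fun A U => by
    simpa only [coordAugLagrangian_pack] using hsnd A U
  dual_update := by
    rw [constraintMap_packMatrixVec_add_sub, hP, hL]
    ext (_ | _) <;> rfl

end ElasticNet

/-- Linear convergence of the ADMM (4) for the elastic-net splitting (3) when
`λ₂ > 0` and `λ₃ > 0`: there exist a primal-dual optimal point (a saddle point of the
Lagrangian) `z₁*`, a constant `C > 0` and a rate `ρ ∈ (0,1)` such that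
`‖z₁^k − z₁*‖ ≤ C ρ^k` for all `k`. -/
theorem stmt_14 (n p J : ℕ) (X : Matrix (Fin p) (Fin n) ℝ) (y : Fin n → Fin J)
    (lam1 lam2 lam3 : ℝ) (hlam1 : 0 ≤ lam1) (hlam2 : 0 < lam2) (hlam3 : 0 < lam3)
    (α μ : ℝ) (hα : 0 < α) (hμ : 0 < μ)
    (Wseq : ℕ → Matrix (Fin p) (Fin J) ℝ) (bseq : ℕ → Fin J → ℝ)
    (Aseq : ℕ → Matrix (Fin n) (Fin J) ℝ) (Useq : ℕ → Matrix (Fin p) (Fin J) ℝ)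
    (Piseq : ℕ → Matrix (Fin n) (Fin J) ℝ) (Lamseq : ℕ → Matrix (Fin p) (Fin J) ℝ) :
    let c : Fin n → Fin J → ℝ := fun i j => if y i ≠ j then 1 else 0
    let feas : Matrix (Fin p) (Fin J) ℝ → (Fin J → ℝ) → Prop := fun W b =>
      (∀ g, ∑ j, W g j = 0) ∧ (∑ j, b j = 0)
    let Amap : Matrix (Fin p) (Fin J) ℝ → (Fin J → ℝ) → Matrix (Fin n) (Fin J) ℝ :=
      fun W b => Matrix.of fun i j => (∑ g, X g i * W g j) + b j + 1
    let F1 : Matrix (Fin p) (Fin J) ℝ → (Fin J → ℝ) → Matrix (Fin n) (Fin J) ℝ →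
        Matrix (Fin p) (Fin J) ℝ → ℝ := fun W b A U =>
      (1 / (n : ℝ)) * (∑ i, ∑ j, c i j * max (A i j) 0) + lam1 * (∑ g, ∑ j, |U g j|)
        + lam2 / 2 * (∑ g, ∑ j, (W g j) ^ 2) + lam3 / 2 * ∑ j, (b j) ^ 2
    let L0 : Matrix (Fin p) (Fin J) ℝ → (Fin J → ℝ) → Matrix (Fin n) (Fin J) ℝ →
        Matrix (Fin p) (Fin J) ℝ → Matrix (Fin n) (Fin J) ℝ →
        Matrix (Fin p) (Fin J) ℝ → ℝ := fun W b A U Pv Lv =>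
      F1 W b A U + (∑ i, ∑ j, Pv i j * (Amap W b i j - A i j))
        + (∑ g, ∑ j, Lv g j * (W g j - U g j))
    let L1 : Matrix (Fin p) (Fin J) ℝ → (Fin J → ℝ) → Matrix (Fin n) (Fin J) ℝ →
        Matrix (Fin p) (Fin J) ℝ → Matrix (Fin n) (Fin J) ℝ →
        Matrix (Fin p) (Fin J) ℝ → ℝ := fun W b A U Pv Lv =>
      L0 W b A U Pv Lv + α / 2 * (∑ i, ∑ j, (Amap W b i j - A i j) ^ 2)
        + μ / 2 * (∑ g, ∑ j, (W g j - U g j) ^ 2)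
    let saddle : Matrix (Fin p) (Fin J) ℝ → (Fin J → ℝ) → Matrix (Fin n) (Fin J) ℝ →
        Matrix (Fin p) (Fin J) ℝ → Matrix (Fin n) (Fin J) ℝ →
        Matrix (Fin p) (Fin J) ℝ → Prop := fun W b A U Pv Lv =>
      feas W b ∧ A = Amap W b ∧ U = W ∧
      (∀ Pv' Lv', L0 W b A U Pv' Lv' ≤ L0 W b A U Pv Lv) ∧
      (∀ W' b' A' U', feas W' b' → L0 W b A U Pv Lv ≤ L0 W' b' A' U' Pv Lv)
    -- the Lagrangian has a saddle point
    (∃ Ws bs As Us Pis Lams, saddle Ws bs As Us Pis Lams) →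
    -- ADMM updates (4a)-(4d)
    (∀ k, feas (Wseq (k + 1)) (bseq (k + 1)) ∧
      ∀ W b, feas W b →
        L1 (Wseq (k + 1)) (bseq (k + 1)) (Aseq k) (Useq k) (Piseq k) (Lamseq k)
          ≤ L1 W b (Aseq k) (Useq k) (Piseq k) (Lamseq k)) →
    (∀ k A U,
      L1 (Wseq (k + 1)) (bseq (k + 1)) (Aseq (k + 1)) (Useq (k + 1)) (Piseq k) (Lamseq k)
        ≤ L1 (Wseq (k + 1)) (bseq (k + 1)) A U (Piseq k) (Lamseq k)) →
    (∀ k, Piseq (k + 1) = Matrix.of fun i j =>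
      Piseq k i j + α * (Amap (Wseq (k + 1)) (bseq (k + 1)) i j - Aseq (k + 1) i j)) →
    (∀ k, Lamseq (k + 1) = Matrix.of fun g j =>
      Lamseq k g j + μ * (Wseq (k + 1) g j - Useq (k + 1) g j)) →
    -- conclusion: linear convergence to a primal-dual optimal point
    (∃ (Ws : Matrix (Fin p) (Fin J) ℝ) (bs : Fin J → ℝ)
        (As : Matrix (Fin n) (Fin J) ℝ) (Us : Matrix (Fin p) (Fin J) ℝ)
        (Pis : Matrix (Fin n) (Fin J) ℝ) (Lams : Matrix (Fin p) (Fin J) ℝ)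
        (C ρ : ℝ),
      saddle Ws bs As Us Pis Lams ∧ 0 < C ∧ 0 < ρ ∧ ρ < 1 ∧
      ∀ k, Real.sqrt ((∑ g, ∑ j, (Wseq k g j - Ws g j) ^ 2)
          + (∑ j, (bseq k j - bs j) ^ 2)
          + (∑ i, ∑ j, (Aseq k i j - As i j) ^ 2)
          + (∑ g, ∑ j, (Useq k g j - Us g j) ^ 2)
          + (∑ i, ∑ j, (Piseq k i j - Pis i j) ^ 2)
          + (∑ g, ∑ j, (Lamseq k g j - Lams g j) ^ 2)) ≤ C * ρ ^ k) := by
  intro c feas Amap F1 L0 L1 saddle ⟨Ws, bs, As, Us, Pis, Lams, hs⟩ hW hA hPi hLam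
  have hc (i j) : 0 ≤ c i j := ite_nonneg zero_le_one le_rfl
  obtain ⟨π, hπ, ρ, hρ, hrate⟩ := exists_isBigO_pow_of_isCoordADMMStep
    (x := fun k => packMatrixVec (Wseq k) (bseq k))
    (v := fun k => packMatrices (Aseq k) (Useq k))
    (π := fun k => packMatrices (Piseq k) (Lamseq k))
    (Sum.forall.2 ⟨fun _ => hlam2, fun _ => hlam3⟩) (Sum.forall.2 ⟨fun _ => hα, fun _ => hμ⟩)
    (convexOn_elasticNetTerm hc (by positivity) hlam1)
    (fun i a ha t => elasticNetTerm_smul c (1 / n) lam1 i ha t)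
    (isCoordSaddle_pack_iff.2 hs)
    fun k => isCoordADMMStep_pack (hW k).1 (hW k).2 (hA k) (hPi k) (hLam k)
  obtain ⟨Pb, Lb, rfl⟩ := exists_eq_packMatrices π
  obtain ⟨hWb, hAUPL⟩ := Asymptotics.isBigO_prod_left.1 hrate
  obtain ⟨hAU, hPL⟩ := Asymptotics.isBigO_prod_left.1 hAUPL
  obtain ⟨C, hC, hbound⟩ := exists_sqrt_sum_sq_le_of_isBigO hρ.1
    (isBigO_sumElim hWb (isBigO_sumElim hAU hPL))
  refine ⟨Ws, bs, As, Us, Pb, Lb, C, ρ, isCoordSaddle_pack_iff.1 hπ, hC, hρ.1, hρ.2, fun k => ?_⟩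
  simpa [packMatrixVec, packMatrices, Fintype.sum_sum_type, Fintype.sum_prod_type, add_assoc]
    using hbound k
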